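/- arXiv:1011.0233 — 6 statements merged into one kernel-verified Lean document; each statement's English description precedes it below -/
import Mathlib

section
/- Let a and b be connected regions satisfying the basic CDC constraints a O b and b E:SE:S:O a. Then (a, b) ∈ s⊗f; explicitly, x⁻(a) = x⁻(b), x⁺(a) < x⁺(b), y⁺(a) = y⁺(b), and y⁻(b) < y⁻(a). -/
/-!
Since the nine tiles of a region cover the plane, forbidding the tiles `W`, `NW`, `SW` of `b` for
`a` forces `interior a` to lie in the closed half-plane `x ≥ x⁻(b)`; as `a` is the closure of its
interior, `x⁻(b) ≤ x⁻(a)` (`xm_le_of_cdc`). Forbidding `NW`, `N`, `NE` similarly gives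
`y⁺(a) ≤ y⁺(b)` (`yp_le_of_cdc`). Both constraints `a O b` and `b E:SE:S:O a` forbid all five of
these tiles, so the left and upper sides of the two bounding rectangles agree. Finally
`interior b` meets `E(a)` and `S(a)`, and an interior point of `b` has `x < x⁺(b)` and `y > y⁻(b)`
because coordinate projections are open maps; hence the two strict inequalities.
-/

open Set

/-- A "region" variable ranges over subsets of the plane ℝ². -/
abbrev Reg : Type := Set (ℝ × ℝ)

/-- `x⁻(a)`: infimum of first coordinates of points of `a`. -/
noncomputable def xm (a : Reg) : ℝ := sInf (Prod.fst '' a)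
/-- `x⁺(a)`: supremum of first coordinates of points of `a`. -/
noncomputable def xp (a : Reg) : ℝ := sSup (Prod.fst '' a)
/-- `y⁻(a)`: infimum of second coordinates of points of `a`. -/
noncomputable def ym (a : Reg) : ℝ := sInf (Prod.snd '' a)
/-- `y⁺(a)`: supremum of second coordinates of points of `a`. -/
noncomputable def yp (a : Reg) : ℝ := sSup (Prod.snd '' a)

/-- `I_x(a) = [x⁻(a), x⁺(a)]`. -/
noncomputable def Ix (a : Reg) : Set ℝ := Icc (xm a) (xp a)
/-- `I_y(a) = [y⁻(a), y⁺(a)]`. -/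
noncomputable def Iy (a : Reg) : Set ℝ := Icc (ym a) (yp a)
/-- Minimum bounding rectangle `M(a) = I_x(a) × I_y(a)`. -/
noncomputable def MBR (a : Reg) : Reg := Ix a ×ˢ Iy a

/-- The nine tile names. -/
inductive Tile : Type
  | NW | N | NE | W | O | E | SW | S | SE
  deriving DecidableEq

/-- The nine tiles of a region `b`. -/
noncomputable def Tile.region : Tile → Reg → Reg
  | .O,  b => Ix b ×ˢ Iy b
  | .N,  b => Ix b ×ˢ Ici (yp b)
  | .S,  b => Ix b ×ˢ Iic (ym b)
  | .E,  b => Ici (xp b) ×ˢ Iy b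
  | .W,  b => Iic (xm b) ×ˢ Iy b
  | .NE, b => Ici (xp b) ×ˢ Ici (yp b)
  | .NW, b => Iic (xm b) ×ˢ Ici (yp b)
  | .SE, b => Ici (xp b) ×ˢ Iic (ym b)
  | .SW, b => Iic (xm b) ×ˢ Iic (ym b)

/-- The basic CDC constraint `a T b`: the set of tile names `χ` with
`interior a ∩ χ(b) ≠ ∅` is exactly `T`. -/
def cdc (a : Reg) (T : Set Tile) (b : Reg) : Prop :=
  ∀ χ : Tile, (interior a ∩ χ.region b).Nonempty ↔ χ ∈ T

/-- A region: a nonempty bounded regular closed subset of the plane. -/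
def IsRegion (a : Reg) : Prop :=
  a.Nonempty ∧ Bornology.IsBounded a ∧ a = closure (interior a)

/-- A connected region: a region whose interior is connected. -/
def IsConnRegion (a : Reg) : Prop :=
  IsRegion a ∧ IsConnected (interior a)

/-- An axis-parallel (nondegenerate, closed) rectangle. -/
def IsRect (a : Reg) : Prop :=
  ∃ x1 x2 y1 y2 : ℝ, x1 < x2 ∧ y1 < y2 ∧ a = Icc x1 x2 ×ˢ Icc y1 y2

/- Basic IA relations on intervals given by their endpoint pairs. -/
def RAs  (I J : ℝ × ℝ) : Prop := I.1 = J.1 ∧ I.2 < J.2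
def RAf  (I J : ℝ × ℝ) : Prop := J.1 < I.1 ∧ I.2 = J.2
def RAsi (I J : ℝ × ℝ) : Prop := RAs J I
def RAfi (I J : ℝ × ℝ) : Prop := RAf J I
def RAo  (I J : ℝ × ℝ) : Prop := I.1 < J.1 ∧ J.1 < I.2 ∧ I.2 < J.2
def RAeq (I J : ℝ × ℝ) : Prop := I = J

/-- `(a, b) ∈ α⊗β`: `I_x(a) α I_x(b)` and `I_y(a) β I_y(b)`. -/
def RA (α β : ℝ × ℝ → ℝ × ℝ → Prop) (a b : Reg) : Prop :=
  α (xm a, xp a) (xm b, xp b) ∧ β (ym a, yp a) (ym b, yp b)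

/-- `a` is vertical w.r.t. `b`: `(a, b) ∈ s⊗fi`. -/
def Vert (a b : Reg) : Prop := RA RAs RAfi a b
/-- `a` is horizontal w.r.t. `b`: `(a, b) ∈ si⊗f`. -/
def Horiz (a b : Reg) : Prop := RA RAsi RAf a b
/-- The upper-left-corner relation `⌜(a,b)`. -/
def ULC (a b : Reg) : Prop := Vert a b ∨ Horiz a b

/-- The network `N_⌜(u, v; w₁, w₂)`. -/
def NetULC (u v w1 w2 : Reg) : Prop :=
  cdc u {Tile.O} w1 ∧ cdc w1 {Tile.E, Tile.SE, Tile.S, Tile.O} u ∧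
  cdc v {Tile.O} w1 ∧ cdc w1 {Tile.E, Tile.SE, Tile.S} v ∧
  cdc v {Tile.O} w2 ∧ cdc w2 {Tile.E, Tile.SE, Tile.S, Tile.O} v ∧
  cdc u {Tile.O} w2 ∧ cdc w2 {Tile.E, Tile.SE, Tile.S} u

/-- The network `N_∥(u, v; w)`. -/
def NetPar (u v w : Reg) : Prop :=
  cdc u {Tile.E} w ∧ cdc w {Tile.E} v ∧ cdc v {Tile.W} u

/-- The network `N_p` for a propositional variable `p`, over the regions
`u_p, u_{¬p}, f_p, f_{¬p}, f_p⁰` and six auxiliary regions. -/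
def NetP (up unp fp fnp fp0 a1 a2 b1 b2 c1 c2 : Reg) : Prop :=
  cdc up {Tile.O} fnp ∧ cdc fp {Tile.O} unp ∧
  NetULC up fp a1 a2 ∧ NetULC unp fnp b1 b2 ∧ NetULC up unp c1 c2 ∧
  cdc fp {Tile.O} fnp ∧ cdc fnp {Tile.E, Tile.SE, Tile.S, Tile.O} fp ∧
  cdc unp {Tile.O} fp0 ∧ cdc fp0 {Tile.E, Tile.SE, Tile.S, Tile.O} unp ∧
  cdc fnp {Tile.O} fp0 ∧ cdc fp0 {Tile.E, Tile.SE, Tile.S, Tile.O} fnp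

/-- The reference network `N_ref`. -/
def NetRef (wref fref fnref f0ref : Reg) : Prop :=
  cdc wref {Tile.O} fref ∧ cdc fref {Tile.O} fnref ∧ cdc fnref {Tile.O} f0ref ∧
  cdc f0ref {Tile.S, Tile.O} fnref ∧ cdc fnref {Tile.S, Tile.O} fref ∧
  cdc fref {Tile.S, Tile.O} wref

/-- An assignment of regions to all variables of the network `N_V`
(for propositional variables `p_1, …, p_n`):
`u i, un i, f i, fn i, f0 i` are `u_i, u_{¬i}, f_i, f_{¬i}, f_i⁰`;
`a1 i, a2 i, b1 i, b2 i, c1 i, c2 i` are the six auxiliary regions of `N_{p_i}`;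
`wref, fref, fnref, f0ref` are the reference regions; and
`pf i, pfn i, pf0 i` are the auxiliary regions of the parallel networks
linking `f_i` (resp. `f_{¬i}`, `f_i⁰`) to its predecessor. -/
structure VAssign (n : ℕ) where
  (u un f fn f0 : Fin n → Reg)
  (a1 a2 b1 b2 c1 c2 : Fin n → Reg)
  (wref fref fnref f0ref : Reg)
  (pf pfn pf0 : Fin n → Reg)

/-- The predecessor in a chain: `g (i-1)` if `i > 0`, else the default `d`. -/
def prevOr {n : ℕ} (g : Fin n → Reg) (d : Reg) (i : Fin n) : Reg :=
  if 0 < i.val then g ⟨i.val - 1, lt_of_le_of_lt (Nat.sub_le _ _) i.isLt⟩ else d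

/-- All the constraints of the network `N_V` hold. -/
def VAssign.Holds {n : ℕ} (S : VAssign n) : Prop :=
  (∀ i, NetP (S.u i) (S.un i) (S.f i) (S.fn i) (S.f0 i)
      (S.a1 i) (S.a2 i) (S.b1 i) (S.b2 i) (S.c1 i) (S.c2 i)) ∧
  NetRef S.wref S.fref S.fnref S.f0ref ∧
  (∀ i, NetPar (S.f i) (prevOr S.f S.fref i) (S.pf i)) ∧
  (∀ i, NetPar (S.fn i) (prevOr S.fn S.fnref i) (S.pfn i)) ∧
  (∀ i, NetPar (S.f0 i) (prevOr S.f0 S.f0ref i) (S.pf0 i))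

/-- Every region of the assignment is a connected region. -/
def VAssign.AllConn {n : ℕ} (S : VAssign n) : Prop :=
  (∀ i, IsConnRegion (S.u i) ∧ IsConnRegion (S.un i) ∧ IsConnRegion (S.f i) ∧
     IsConnRegion (S.fn i) ∧ IsConnRegion (S.f0 i) ∧ IsConnRegion (S.a1 i) ∧
     IsConnRegion (S.a2 i) ∧ IsConnRegion (S.b1 i) ∧ IsConnRegion (S.b2 i) ∧
     IsConnRegion (S.c1 i) ∧ IsConnRegion (S.c2 i) ∧ IsConnRegion (S.pf i) ∧
     IsConnRegion (S.pfn i) ∧ IsConnRegion (S.pf0 i)) ∧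
  IsConnRegion S.wref ∧ IsConnRegion S.fref ∧ IsConnRegion S.fnref ∧
  IsConnRegion S.f0ref

/-- Every region of the assignment is an axis-parallel rectangle. -/
def VAssign.AllRect {n : ℕ} (S : VAssign n) : Prop :=
  (∀ i, IsRect (S.u i) ∧ IsRect (S.un i) ∧ IsRect (S.f i) ∧
     IsRect (S.fn i) ∧ IsRect (S.f0 i) ∧ IsRect (S.a1 i) ∧
     IsRect (S.a2 i) ∧ IsRect (S.b1 i) ∧ IsRect (S.b2 i) ∧
     IsRect (S.c1 i) ∧ IsRect (S.c2 i) ∧ IsRect (S.pf i) ∧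
     IsRect (S.pfn i) ∧ IsRect (S.pf0 i)) ∧
  IsRect S.wref ∧ IsRect S.fref ∧ IsRect S.fnref ∧ IsRect S.f0ref

/-- A clause `c = p_r* ∨ p_s* ∨ p_t*` with `r < s < t`; the Booleans record
whether each literal is positive (`true`) or negative (`false`). -/
structure Clause (n : ℕ) where
  r : Fin n
  s : Fin n
  t : Fin n
  hrs : r < s
  hst : s < t
  sr : Bool
  ss : Bool
  st : Bool

/-- An assignment of regions to the fresh variables of a clause network `N_c`:
`vc, w₀, w_rs, w_st, w₁` plus the two auxiliary regions `pa, pb` of the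
parallel networks for `w₀` and `w₁`. -/
structure CAssign where
  vc : Reg
  w0 : Reg
  wrs : Reg
  wst : Reg
  w1 : Reg
  pa : Reg
  pb : Reg

/-- `u_i*`: `u_i` for a positive literal and `u_{¬i}` for a negative one. -/
def ustar {n : ℕ} (S : VAssign n) (i : Fin n) (sign : Bool) : Reg :=
  if sign then S.u i else S.un i

/-- The frame of literal `p_i*`: `f_i` for a positive literal, `f_{¬i}` otherwise. -/
def fstar {n : ℕ} (S : VAssign n) (i : Fin n) (sign : Bool) : Reg :=
  if sign then S.f i else S.fn i

/-- All the constraints of the clause network `N_c` (including those of `N_V`). -/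
def NetC {n : ℕ} (S : VAssign n) (c : Clause n) (C : CAssign) : Prop :=
  S.Holds ∧
  NetPar C.w0 S.wref C.pa ∧ NetPar C.w1 S.wref C.pb ∧
  cdc C.w0 {Tile.W, Tile.O} (S.f c.r) ∧
  cdc (S.f c.r) {Tile.E, Tile.SE, Tile.S, Tile.O} C.w0 ∧
  (if c.sr then
    cdc (S.f c.r) {Tile.W, Tile.O} C.wrs ∧ cdc C.wrs {Tile.E, Tile.O} (S.f c.r)
   else
    cdc (S.fn c.r) {Tile.S, Tile.SW, Tile.W, Tile.O} C.wrs ∧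
    cdc C.wrs {Tile.E, Tile.O} (S.fn c.r)) ∧
  cdc C.wrs {Tile.W, Tile.O} (S.f c.s) ∧ cdc (S.f c.s) {Tile.E, Tile.O} C.wrs ∧
  (if c.ss then
    cdc (S.f c.s) {Tile.W, Tile.O} C.wst ∧ cdc C.wst {Tile.E, Tile.O} (S.f c.s)
   else
    cdc (S.fn c.s) {Tile.S, Tile.SW, Tile.W, Tile.O} C.wst ∧
    cdc C.wst {Tile.E, Tile.O} (S.fn c.s)) ∧
  cdc C.wst {Tile.W, Tile.O} (S.f c.t) ∧ cdc (S.f c.t) {Tile.E, Tile.O} C.wst ∧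
  (if c.st then
    cdc (S.f c.t) {Tile.S, Tile.SW, Tile.W, Tile.O} C.w1 ∧
    cdc C.w1 {Tile.E, Tile.O} (S.f c.t)
   else
    cdc (S.fn c.t) {Tile.S, Tile.SW, Tile.W, Tile.O} C.w1 ∧
    cdc C.w1 {Tile.E, Tile.O} (S.fn c.t)) ∧
  cdc C.w0 {Tile.O} C.vc ∧
  cdc (ustar S c.r c.sr) {Tile.O} C.vc ∧
  cdc C.wrs {Tile.O} C.vc ∧
  cdc (ustar S c.s c.ss) {Tile.O} C.vc ∧
  cdc C.wst {Tile.O} C.vc ∧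
  cdc (ustar S c.t c.st) {Tile.O} C.vc ∧
  cdc C.w1 {Tile.O} C.vc ∧
  cdc C.vc {Tile.E, Tile.SE, Tile.S} C.w0 ∧
  cdc C.vc {Tile.S, Tile.SW, Tile.W} C.w1 ∧
  cdc C.vc {Tile.E, Tile.SE, Tile.S, Tile.SW, Tile.W} (ustar S c.r c.sr) ∧
  cdc C.vc {Tile.E, Tile.SE, Tile.S, Tile.SW, Tile.W} C.wrs ∧
  cdc C.vc {Tile.E, Tile.SE, Tile.S, Tile.SW, Tile.W} (ustar S c.s c.ss) ∧
  cdc C.vc {Tile.E, Tile.SE, Tile.S, Tile.SW, Tile.W} C.wst ∧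
  cdc C.vc {Tile.E, Tile.SE, Tile.S, Tile.SW, Tile.W} (ustar S c.t c.st)

/-- Every clause region is a connected region. -/
def CAssign.AllConn (C : CAssign) : Prop :=
  IsConnRegion C.vc ∧ IsConnRegion C.w0 ∧ IsConnRegion C.wrs ∧
  IsConnRegion C.wst ∧ IsConnRegion C.w1 ∧ IsConnRegion C.pa ∧ IsConnRegion C.pb

/-- Every clause region except `v_c` is an axis-parallel rectangle. -/
def CAssign.RectExceptVc (C : CAssign) : Prop :=
  IsRect C.w0 ∧ IsRect C.wrs ∧ IsRect C.wst ∧ IsRect C.w1 ∧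
  IsRect C.pa ∧ IsRect C.pb

theorem xm_le_of_cdc {a b : Reg} {T : Set Tile} (ha : IsRegion a) (h : cdc a T b)
    (hW : Tile.W ∉ T) (hNW : Tile.NW ∉ T) (hSW : Tile.SW ∉ T) : xm b ≤ xm a := by
  obtain ⟨hne, -, hreg⟩ := ha
  have hsub : interior a ⊆ {p : ℝ × ℝ | xm b ≤ p.1} := by
    intro p hp
    by_contra hlt
    have hx : p.1 ≤ xm b := (not_le.mp hlt).le
    rcases le_total p.2 (ym b) with hy | hy
    · exact hSW ((h Tile.SW).1 ⟨p, hp, hx, hy⟩)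
    rcases le_total (yp b) p.2 with hy' | hy'
    · exact hNW ((h Tile.NW).1 ⟨p, hp, hx, hy'⟩)
    · exact hW ((h Tile.W).1 ⟨p, hp, hx, hy, hy'⟩)
  have hcl : closure (interior a) ⊆ {p : ℝ × ℝ | xm b ≤ p.1} :=
    closure_minimal hsub (isClosed_le continuous_const continuous_fst)
  rw [← hreg] at hcl
  refine le_csInf (hne.image _) ?_
  rintro _ ⟨p, hp, rfl⟩
  exact hcl hp

theorem yp_le_of_cdc {a b : Reg} {T : Set Tile} (ha : IsRegion a) (h : cdc a T b)
    (hN : Tile.N ∉ T) (hNW : Tile.NW ∉ T) (hNE : Tile.NE ∉ T) : yp a ≤ yp b := by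
  obtain ⟨hne, -, hreg⟩ := ha
  have hsub : interior a ⊆ {p : ℝ × ℝ | p.2 ≤ yp b} := by
    intro p hp
    by_contra hlt
    have hy : yp b ≤ p.2 := (not_le.mp hlt).le
    rcases le_total p.1 (xm b) with hx | hx
    · exact hNW ((h Tile.NW).1 ⟨p, hp, hx, hy⟩)
    rcases le_total (xp b) p.1 with hx' | hx'
    · exact hNE ((h Tile.NE).1 ⟨p, hp, hx', hy⟩)
    · exact hN ((h Tile.N).1 ⟨p, hp, ⟨hx, hx'⟩, hy⟩)
  have hcl : closure (interior a) ⊆ {p : ℝ × ℝ | p.2 ≤ yp b} :=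
    closure_minimal hsub (isClosed_le continuous_snd continuous_const)
  rw [← hreg] at hcl
  refine csSup_le (hne.image _) ?_
  rintro _ ⟨p, hp, rfl⟩
  exact hcl hp

theorem fst_lt_xp {b : Reg} (hb : IsRegion b) {p : ℝ × ℝ} (hp : p ∈ interior b) :
    p.1 < xp b := by
  have hsub : Prod.fst '' interior b ⊆ Iic (xp b) := by
    rintro _ ⟨q, hq, rfl⟩
    exact le_csSup hb.2.1.image_fst.bddAbove ⟨q, interior_subset hq, rfl⟩
  have hint := interior_maximal hsub (isOpenMap_fst _ isOpen_interior)
  rw [interior_Iic] at hint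
  exact hint ⟨p, hp, rfl⟩

theorem ym_lt_snd {b : Reg} (hb : IsRegion b) {p : ℝ × ℝ} (hp : p ∈ interior b) :
    ym b < p.2 := by
  have hsub : Prod.snd '' interior b ⊆ Ici (ym b) := by
    rintro _ ⟨q, hq, rfl⟩
    exact csInf_le hb.2.1.image_snd.bddBelow ⟨q, interior_subset hq, rfl⟩
  have hint := interior_maximal hsub (isOpenMap_snd _ isOpen_interior)
  rw [interior_Ici] at hint
  exact hint ⟨p, hp, rfl⟩

/-- If connected regions `a, b` satisfy the basic CDC constraints
`a O b` and `b E:SE:S:O a`, then `(a, b) ∈ s⊗f`; explicitly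
`x⁻(a) = x⁻(b)`, `x⁺(a) < x⁺(b)`, `y⁺(a) = y⁺(b)`, and `y⁻(b) < y⁻(a)`. -/
theorem stmt0 (a b : Reg) (ha : IsConnRegion a) (hb : IsConnRegion b)
    (h1 : cdc a {Tile.O} b)
    (h2 : cdc b {Tile.E, Tile.SE, Tile.S, Tile.O} a) :
    RA RAs RAf a b ∧
    xm a = xm b ∧ xp a < xp b ∧ yp a = yp b ∧ ym b < ym a := by
  have hx : xm a = xm b := le_antisymm
    (xm_le_of_cdc hb.1 h2 (by simp) (by simp) (by simp))
    (xm_le_of_cdc ha.1 h1 (by simp) (by simp) (by simp))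
  have hy : yp a = yp b := le_antisymm
    (yp_le_of_cdc ha.1 h1 (by simp) (by simp) (by simp))
    (yp_le_of_cdc hb.1 h2 (by simp) (by simp) (by simp))
  have hx' : xp a < xp b := by
    obtain ⟨p, hp, hpE⟩ := (h2 Tile.E).2 (by simp)
    exact lt_of_le_of_lt hpE.1 (fst_lt_xp hb.1 hp)
  have hy' : ym b < ym a := by
    obtain ⟨p, hp, hpS⟩ := (h2 Tile.S).2 (by simp)
    exact lt_of_lt_of_le (ym_lt_snd hb.1 hp) hpS.2
  exact ⟨⟨⟨hx, hx'⟩, ⟨hy', hy⟩⟩, hx, hx', hy, hy'⟩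
end

section
/- Let a = [a₁, a₂] × [a₃, a₄] and b = [b₁, b₂] × [b₃, b₄] be closed axis-parallel rectangles with a₁ < a₂, a₃ < a₄, b₁ < b₂, b₃ < b₄. Then the pair of basic CDC constraints a O b and b E:SE:S:O a holds if and only if (a, b) ∈ s⊗f, i.e. a₁ = b₁, a₂ < b₂, a₄ = b₄ and b₃ < a₃. -/
/-!
For a nondegenerate rectangle `[u₁, u₂] × [u₃, u₄]` the interior is the open rectangle with the same
endpoints, and every tile is a product of intervals. Hence "the interior of one rectangle meets a
tile of the other" splits into a condition on each axis, and each of those is a strict comparison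
of endpoints: `(u, v)` meets `[p, q]` iff `u < q` and `p < v`, meets `[p, ∞)` iff `p < v`, and meets
`(-∞, p]` iff `u < p`. Both CDC constraints thereby become finite Boolean combinations of
order relations between endpoints (`cdc_rect_iff`), and the equivalence is a statement about linear
orders: the absence of `W` (resp. `N`) from both constraints gives equality of the left (resp. upper)
sides, and the presence of `E` and `S` in `b E:SE:S:O a` gives the two strict inequalities.
-/

open Set

lemma Ioo_inter_Icc_nonempty_iff {u v p q : ℝ} (huv : u < v) (hpq : p < q) :
    (Ioo u v ∩ Icc p q).Nonempty ↔ u < q ∧ p < v := by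
  constructor
  · rintro ⟨x, ⟨h1, h2⟩, h3, h4⟩
    exact ⟨by linarith, by linarith⟩
  · rintro ⟨h1, h2⟩
    obtain ⟨x, hx1, hx2⟩ : ∃ x, max u p < x ∧ x < min v q :=
      exists_between (by simp [*])
    rw [max_lt_iff] at hx1
    rw [lt_min_iff] at hx2
    exact ⟨x, ⟨hx1.1, hx2.1⟩, hx1.2.le, hx2.2.le⟩

lemma Ioo_inter_Ici_nonempty_iff {u v p : ℝ} (huv : u < v) :
    (Ioo u v ∩ Ici p).Nonempty ↔ p < v := by
  constructor
  · rintro ⟨x, ⟨h1, h2⟩, h3⟩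
    exact lt_of_le_of_lt h3 h2
  · intro h
    obtain ⟨x, hx1, hx2⟩ : ∃ x, max u p < x ∧ x < v := exists_between (by simp [*])
    rw [max_lt_iff] at hx1
    exact ⟨x, ⟨hx1.1, hx2⟩, hx1.2.le⟩

lemma Ioo_inter_Iic_nonempty_iff {u v p : ℝ} (huv : u < v) :
    (Ioo u v ∩ Iic p).Nonempty ↔ u < p := by
  constructor
  · rintro ⟨x, ⟨h1, h2⟩, h3⟩
    exact lt_of_lt_of_le h1 h3
  · intro h
    obtain ⟨x, hx1, hx2⟩ : ∃ x, u < x ∧ x < min v p := exists_between (by simp [*])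
    rw [lt_min_iff] at hx2
    exact ⟨x, ⟨hx1, hx2.1⟩, hx2.2.le⟩

/-- The endpoint form of a basic CDC constraint between nondegenerate rectangles: a tile name
belongs to `T` iff the corresponding strict endpoint comparisons hold on both axes. -/
lemma cdc_rect_iff {u1 u2 u3 u4 v1 v2 v3 v4 : ℝ}
    (hu12 : u1 < u2) (hu34 : u3 < u4) (hv12 : v1 < v2) (hv34 : v3 < v4) (T : Set Tile) :
    cdc (Icc u1 u2 ×ˢ Icc u3 u4) T (Icc v1 v2 ×ˢ Icc v3 v4) ↔
      ((u1 < v2 ∧ v1 < u2) ∧ (u3 < v4 ∧ v3 < u4) ↔ Tile.O ∈ T) ∧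
      ((u1 < v2 ∧ v1 < u2) ∧ v4 < u4 ↔ Tile.N ∈ T) ∧
      ((u1 < v2 ∧ v1 < u2) ∧ u3 < v3 ↔ Tile.S ∈ T) ∧
      (v2 < u2 ∧ (u3 < v4 ∧ v3 < u4) ↔ Tile.E ∈ T) ∧
      (u1 < v1 ∧ (u3 < v4 ∧ v3 < u4) ↔ Tile.W ∈ T) ∧
      (v2 < u2 ∧ v4 < u4 ↔ Tile.NE ∈ T) ∧
      (u1 < v1 ∧ v4 < u4 ↔ Tile.NW ∈ T) ∧
      (v2 < u2 ∧ u3 < v3 ↔ Tile.SE ∈ T) ∧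
      (u1 < v1 ∧ u3 < v3 ↔ Tile.SW ∈ T) := by
  have hx : Prod.fst '' (Icc v1 v2 ×ˢ Icc v3 v4) = Icc v1 v2 :=
    fst_image_prod _ (nonempty_Icc.2 hv34.le)
  have hy : Prod.snd '' (Icc v1 v2 ×ˢ Icc v3 v4) = Icc v3 v4 :=
    snd_image_prod (nonempty_Icc.2 hv12.le) _
  have key : ∀ χ : Tile, (interior (Icc u1 u2 ×ˢ Icc u3 u4) ∩
      χ.region (Icc v1 v2 ×ˢ Icc v3 v4)).Nonempty ↔ match χ with
      | .O => (u1 < v2 ∧ v1 < u2) ∧ (u3 < v4 ∧ v3 < u4)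
      | .N => (u1 < v2 ∧ v1 < u2) ∧ v4 < u4
      | .S => (u1 < v2 ∧ v1 < u2) ∧ u3 < v3
      | .E => v2 < u2 ∧ (u3 < v4 ∧ v3 < u4)
      | .W => u1 < v1 ∧ (u3 < v4 ∧ v3 < u4)
      | .NE => v2 < u2 ∧ v4 < u4
      | .NW => u1 < v1 ∧ v4 < u4
      | .SE => v2 < u2 ∧ u3 < v3
      | .SW => u1 < v1 ∧ u3 < v3 := by
    intro χ
    cases χ <;>
      simp only [Tile.region, Ix, Iy, xm, xp, ym, yp, hx, hy, csInf_Icc hv12.le, csSup_Icc hv12.le,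
        csInf_Icc hv34.le, csSup_Icc hv34.le, interior_prod_eq, interior_Icc, prod_inter_prod,
        prod_nonempty_iff, Ioo_inter_Icc_nonempty_iff hu12 hv12,
        Ioo_inter_Icc_nonempty_iff hu34 hv34, Ioo_inter_Ici_nonempty_iff hu12,
        Ioo_inter_Ici_nonempty_iff hu34, Ioo_inter_Iic_nonempty_iff hu12,
        Ioo_inter_Iic_nonempty_iff hu34]
  unfold cdc
  simp only [key]
  constructor
  · intro h
    exact ⟨h .O, h .N, h .S, h .E, h .W, h .NE, h .NW, h .SE, h .SW⟩
  · rintro ⟨hO, hN, hS, hE, hW, hNE, hNW, hSE, hSW⟩ χ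
    cases χ <;> assumption

/-- For nondegenerate closed axis-parallel rectangles
`a = [a₁,a₂] × [a₃,a₄]` and `b = [b₁,b₂] × [b₃,b₄]`, the pair of basic CDC
constraints `a O b` and `b E:SE:S:O a` holds iff `(a, b) ∈ s⊗f`, i.e.
`a₁ = b₁ ∧ a₂ < b₂ ∧ a₄ = b₄ ∧ b₃ < a₃`. -/
theorem stmt1 (a1 a2 a3 a4 b1 b2 b3 b4 : ℝ)
    (ha12 : a1 < a2) (ha34 : a3 < a4) (hb12 : b1 < b2) (hb34 : b3 < b4)
    (a b : Reg)
    (ha : a = Icc a1 a2 ×ˢ Icc a3 a4)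
    (hb : b = Icc b1 b2 ×ˢ Icc b3 b4) :
    (cdc a {Tile.O} b ∧ cdc b {Tile.E, Tile.SE, Tile.S, Tile.O} a) ↔
      (a1 = b1 ∧ a2 < b2 ∧ a4 = b4 ∧ b3 < a3) := by
  subst ha hb
  rw [cdc_rect_iff ha12 ha34 hb12 hb34, cdc_rect_iff hb12 hb34 ha12 ha34]
  simp only [mem_insert_iff, mem_singleton_iff, reduceCtorEq, or_false, or_true, iff_true,
    iff_false]
  constructor
  · rintro ⟨⟨hO, hN, hS, hE, hW, -⟩, -, hN', ⟨-, hS'⟩, ⟨hE', -⟩, hW', -⟩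
    -- The rectangles overlap on both axes, so an absent side tile is a single failed comparison.
    have h1 : b1 ≤ a1 := not_lt.1 fun h => hW ⟨h, hO.2⟩
    have h4 : a4 ≤ b4 := not_lt.1 fun h => hN ⟨hO.1, h⟩
    have h1' : a1 ≤ b1 := not_lt.1 fun h => hW' ⟨h, hO.2.symm⟩
    have h4' : b4 ≤ a4 := not_lt.1 fun h => hN' ⟨hO.1.symm, h⟩
    exact ⟨le_antisymm h1' h1, hE', le_antisymm h4 h4', hS'⟩
  · rintro ⟨rfl, h2, rfl, h3⟩
    grind
end

section
/- Let a and b be connected regions satisfying the basic CDC constraints a W:O b and b E:O a. Then (a, b) ∈ o⊗eq, i.e. x⁻(a) < x⁻(b) < x⁺(a) < x⁺(b) and I_y(a) = I_y(b). -/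
/-! Since the tiles cover the plane, `a W:O b` keeps the interior of `a`, hence its closure `a`,
in the horizontal strip `ℝ × I_y(b)`; symmetrically `b` lies in `ℝ × I_y(a)`, so the two
`y`-intervals coincide (`cdc.snd_mem`, `y_bounds`). The three strict inequalities come from one
interior point each: of `a` in `W(b)`, of `a` in `O(b)`, and of `b` in `E(a)`, because an interior
point never attains the extreme abscissae of its region (`fst_mem_Ioo`). -/

open Set

/-- The first coordinates of interior points of a bounded set lie strictly between its extremes:
the projection is open, so it maps the interior into the interior of `I_x(a)`. -/
theorem fst_mem_Ioo {a : Reg} (ha : Bornology.IsBounded a) {p : ℝ × ℝ} (hp : p ∈ interior a) :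
    xm a < p.1 ∧ p.1 < xp a := by
  have hb : Bornology.IsBounded (Prod.fst '' a) := ha.image_fst
  have hsub : Prod.fst '' interior a ⊆ Icc (xm a) (xp a) := by
    rintro _ ⟨q, hq, rfl⟩
    have hq' : q.1 ∈ Prod.fst '' a := mem_image_of_mem _ (interior_subset hq)
    exact ⟨csInf_le hb.bddBelow hq', le_csSup hb.bddAbove hq'⟩
  have h := interior_maximal hsub (isOpenMap_fst _ isOpen_interior) (mem_image_of_mem _ hp)
  rwa [interior_Icc] at h

/-- A closed set that contains the interior of a region contains the whole region. -/
theorem IsRegion.subset_of_interior_subset {a c : Reg} (ha : IsRegion a) (hc : IsClosed c)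
    (h : interior a ⊆ c) : a ⊆ c := by
  rw [ha.2.2]
  exact closure_minimal h hc

/-- Bounds on the second coordinates over the interior of a region pass to the region itself, which
is the closure of its interior. -/
theorem y_bounds {a b : Reg} (ha : IsRegion a)
    (h : ∀ p ∈ interior a, ym b ≤ p.2 ∧ p.2 ≤ yp b) : ym b ≤ ym a ∧ yp a ≤ yp b := by
  have hsub : a ⊆ Prod.snd ⁻¹' Icc (ym b) (yp b) :=
    ha.subset_of_interior_subset (isClosed_Icc.preimage continuous_snd) h
  constructor
  · refine le_csInf (ha.1.image _) ?_
    rintro _ ⟨p, hp, rfl⟩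
    exact (hsub hp).1
  · refine csSup_le (ha.1.image _) ?_
    rintro _ ⟨p, hp, rfl⟩
    exact (hsub hp).2

theorem cdc.notMem {a b : Reg} {T : Set Tile} (h : cdc a T b) {χ : Tile} (hχ : χ ∉ T)
    {p : ℝ × ℝ} (hp : p ∈ interior a) : p ∉ χ.region b :=
  fun hpb => hχ ((h χ).1 ⟨p, hp, hpb⟩)

/-- If all tiles of the constraint lie in the middle row, then interior points of `a` have second
coordinate in `I_y(b)`. -/
theorem cdc.snd_mem {a b : Reg} {T : Set Tile} (h : cdc a T b)
    (hT : T ⊆ {Tile.W, Tile.O, Tile.E}) {p : ℝ × ℝ} (hp : p ∈ interior a) :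
    ym b ≤ p.2 ∧ p.2 ≤ yp b := by
  have key : ∀ χ : Tile, χ ∉ ({Tile.W, Tile.O, Tile.E} : Set Tile) → p ∉ χ.region b :=
    fun χ hχ => h.notMem (fun hc => hχ (hT hc)) hp
  constructor
  · by_contra! hlt
    rcases le_total p.1 (xm b) with hx | hx
    · exact key .SW (by simp) ⟨hx, hlt.le⟩
    rcases le_total p.1 (xp b) with hx' | hx'
    · exact key .S (by simp) ⟨⟨hx, hx'⟩, hlt.le⟩
    · exact key .SE (by simp) ⟨hx', hlt.le⟩
  · by_contra! hlt
    rcases le_total p.1 (xm b) with hx | hx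
    · exact key .NW (by simp) ⟨hx, hlt.le⟩
    rcases le_total p.1 (xp b) with hx' | hx'
    · exact key .N (by simp) ⟨⟨hx, hx'⟩, hlt.le⟩
    · exact key .NE (by simp) ⟨hx', hlt.le⟩

/-- If connected regions `a, b` satisfy the basic CDC constraints
`a W:O b` and `b E:O a`, then `(a, b) ∈ o⊗eq`, i.e.
`x⁻(a) < x⁻(b) < x⁺(a) < x⁺(b)` and `I_y(a) = I_y(b)`. -/
theorem stmt2 (a b : Reg) (ha : IsConnRegion a) (hb : IsConnRegion b)
    (h1 : cdc a {Tile.W, Tile.O} b)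
    (h2 : cdc b {Tile.E, Tile.O} a) :
    RA RAo RAeq a b ∧
    xm a < xm b ∧ xm b < xp a ∧ xp a < xp b ∧ ym a = ym b ∧ yp a = yp b := by
  obtain ⟨p, hp, hpW⟩ := (h1 .W).2 (by simp)
  obtain ⟨q, hq, hqO⟩ := (h1 .O).2 (by simp)
  obtain ⟨r, hr, hrE⟩ := (h2 .E).2 (by simp)
  have hx1 : xm a < xm b := (fst_mem_Ioo ha.1.2.1 hp).1.trans_le hpW.1
  have hx2 : xm b < xp a := hqO.1.1.trans_lt (fst_mem_Ioo ha.1.2.1 hq).2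
  have hx3 : xp a < xp b := lt_of_le_of_lt hrE.1 (fst_mem_Ioo hb.1.2.1 hr).2
  have hab := y_bounds ha.1 fun p hp =>
    h1.snd_mem (by rintro _ (rfl | rfl) <;> simp) hp
  have hba := y_bounds hb.1 fun p hp =>
    h2.snd_mem (by rintro _ (rfl | rfl) <;> simp) hp
  have hm : ym a = ym b := le_antisymm hba.1 hab.1
  have hM : yp a = yp b := le_antisymm hab.2 hba.2
  exact ⟨⟨⟨hx1, hx2, hx3⟩, Prod.ext hm hM⟩, hx1, hx2, hx3, hm, hM⟩
end

section
/- Let a, b, c be connected regions satisfying the basic CDC constraints a E c, c E b, and b W a. Then a is right-side parallel with gap to b, i.e. x⁺(b) < x⁻(a) and I_y(a) = I_y(b). -/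
/-!
If `a E b` holds, then, since the nine tiles of `b` cover the plane, the interior of `a`
lies in the tile `E(b)`. Tiles are closed and `a` is the closure of its interior, so all of `a` lies
in `E(b)`, which gives `x⁺(b) ≤ x⁻(a)` and `I_y(a) ⊆ I_y(b)`; similarly for `W`
(`subset_tile_of_cdc_singleton`, `bounds_of_cdc_E`, `bounds_of_cdc_W`). The three constraints
therefore give the cycle `I_y(a) ⊆ I_y(c) ⊆ I_y(b) ⊆ I_y(a)`, so these intervals agree. They also
give `x⁺(b) ≤ x⁻(c) < x⁺(c) ≤ x⁻(a)`, the strict inequality holding because `c` has nonempty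
interior (`xm_lt_xp`).
-/

open Set

/-- The nine tiles of a region cover the plane. -/
lemma exists_mem_tile (b : Reg) (p : ℝ × ℝ) : ∃ χ : Tile, p ∈ χ.region b := by
  have hx : p.1 ≤ xm b ∨ (xm b ≤ p.1 ∧ p.1 ≤ xp b) ∨ xp b ≤ p.1 := by grind
  have hy : p.2 ≤ ym b ∨ (ym b ≤ p.2 ∧ p.2 ≤ yp b) ∨ yp b ≤ p.2 := by grind
  rcases hx with hx | hx | hx <;> rcases hy with hy | hy | hy
  · exact ⟨.SW, hx, hy⟩
  · exact ⟨.W, hx, hy⟩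
  · exact ⟨.NW, hx, hy⟩
  · exact ⟨.S, hx, hy⟩
  · exact ⟨.O, hx, hy⟩
  · exact ⟨.N, hx, hy⟩
  · exact ⟨.SE, hx, hy⟩
  · exact ⟨.E, hx, hy⟩
  · exact ⟨.NE, hx, hy⟩

lemma isClosed_tile (χ : Tile) (b : Reg) : IsClosed (χ.region b) := by
  cases χ
  · exact isClosed_Iic.prod isClosed_Ici
  · exact isClosed_Icc.prod isClosed_Ici
  · exact isClosed_Ici.prod isClosed_Ici
  · exact isClosed_Iic.prod isClosed_Icc
  · exact isClosed_Icc.prod isClosed_Icc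
  · exact isClosed_Ici.prod isClosed_Icc
  · exact isClosed_Iic.prod isClosed_Iic
  · exact isClosed_Icc.prod isClosed_Iic
  · exact isClosed_Ici.prod isClosed_Iic

/-- A single-tile constraint confines the whole region, boundary included, to that tile. -/
lemma subset_tile_of_cdc_singleton {a b : Reg} {χ : Tile} (ha : IsRegion a)
    (h : cdc a {χ} b) : a ⊆ χ.region b := by
  rw [ha.2.2]
  refine closure_minimal (fun p hp => ?_) (isClosed_tile χ b)
  obtain ⟨ψ, hψ⟩ := exists_mem_tile b p
  obtain rfl : ψ = χ := (h ψ).1 ⟨p, hp, hψ⟩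
  exact hψ

lemma bounds_of_cdc_E {a b : Reg} (ha : IsRegion a) (h : cdc a {Tile.E} b) :
    xp b ≤ xm a ∧ ym b ≤ ym a ∧ yp a ≤ yp b := by
  have hsub := subset_tile_of_cdc_singleton ha h
  refine ⟨le_csInf (ha.1.image _) ?_, le_csInf (ha.1.image _) ?_, csSup_le (ha.1.image _) ?_⟩
  · rintro _ ⟨p, hp, rfl⟩
    exact (hsub hp).1
  · rintro _ ⟨p, hp, rfl⟩
    exact (hsub hp).2.1
  · rintro _ ⟨p, hp, rfl⟩
    exact (hsub hp).2.2

lemma bounds_of_cdc_W {a b : Reg} (ha : IsRegion a) (h : cdc a {Tile.W} b) :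
    xp a ≤ xm b ∧ ym b ≤ ym a ∧ yp a ≤ yp b := by
  have hsub := subset_tile_of_cdc_singleton ha h
  refine ⟨csSup_le (ha.1.image _) ?_, le_csInf (ha.1.image _) ?_, csSup_le (ha.1.image _) ?_⟩
  · rintro _ ⟨p, hp, rfl⟩
    exact (hsub hp).1
  · rintro _ ⟨p, hp, rfl⟩
    exact (hsub hp).2.1
  · rintro _ ⟨p, hp, rfl⟩
    exact (hsub hp).2.2

/-- The interior lies over the open interval `(x⁻, x⁺)`, so it can only be nonempty if that
interval is. -/
lemma xm_lt_xp {a : Reg} (hbd : Bornology.IsBounded a) (hne : (interior a).Nonempty) :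
    xm a < xp a := by
  have hb : Bornology.IsBounded (Prod.fst '' a) := hbd.image_fst
  have hsub : a ⊆ Icc (xm a) (xp a) ×ˢ (univ : Set ℝ) := fun p hp =>
    ⟨⟨csInf_le hb.bddBelow ⟨p, hp, rfl⟩, le_csSup hb.bddAbove ⟨p, hp, rfl⟩⟩, mem_univ _⟩
  obtain ⟨p, hp⟩ := hne
  have hp' := interior_mono hsub hp
  rw [interior_prod_eq, interior_Icc] at hp'
  exact hp'.1.1.trans hp'.1.2

/-- If connected regions `a, b, c` satisfy the basic CDC
constraints `a E c`, `c E b` and `b W a`, then `a` is right-side parallel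
with gap to `b`: `x⁺(b) < x⁻(a)` and `I_y(a) = I_y(b)`. -/
theorem stmt4 (a b c : Reg)
    (ha : IsConnRegion a) (hb : IsConnRegion b) (hc : IsConnRegion c)
    (h1 : cdc a {Tile.E} c) (h2 : cdc c {Tile.E} b) (h3 : cdc b {Tile.W} a) :
    xp b < xm a ∧ ym a = ym b ∧ yp a = yp b := by
  obtain ⟨hca, hy1, hy1'⟩ := bounds_of_cdc_E ha.1 h1
  obtain ⟨hbc, hy2, hy2'⟩ := bounds_of_cdc_E hc.1 h2
  obtain ⟨-, hy3, hy3'⟩ := bounds_of_cdc_W hb.1 h3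
  have hcc := xm_lt_xp hc.1.2.1 hc.2.nonempty
  exact ⟨by linarith, by linarith, by linarith⟩
end

section
/- Let a, b, c be connected regions satisfying the basic CDC constraints a O c, c E:SE:S:O a, b O c, and c E:SE:S b. Then the minimum bounding rectangles of a, b, c all share the same upper-left corner point, i.e. x⁻(a) = x⁻(b) = x⁻(c) and y⁺(a) = y⁺(b) = y⁺(c); moreover M(a) is not contained in M(b). -/
/-!
The constraint `r O c` forces the interior of `r`, and so its closure `r`, to lie weakly to
the right of `x⁻(c)` and weakly below `y⁺(c)`. If `c` meets only the tiles `E`, `SE`, `S`, `O`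
of `r`, the same holds with `r` and `c` exchanged, so `M(r)` and `M(c)` share their upper-left
corner (`corner_eq`). This applies to both `a` and `b`. Finally the interior of `c` meets
`O(a) = M(a)` but not `O(b) = M(b)`, so `M(a) ⊆ M(b)` is impossible.
-/

open Set

lemma IsRegion.closure_interior {r : Reg} (h : IsRegion r) : closure (interior r) = r :=
  h.2.2.symm

/-- Coordinate bounds on the interior of a region pass to the region, because it is the
closure of its interior; hence they bound `x⁻` and `y⁺`. -/
lemma IsRegion.bounds_of_interior {r : Reg} (h : IsRegion r) {x y : ℝ}
    (hi : ∀ p ∈ interior r, x ≤ p.1 ∧ p.2 ≤ y) : x ≤ xm r ∧ yp r ≤ y := by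
  have hsub : interior r ⊆ Ici x ×ˢ Iic y := fun p hp => hi p hp
  have hr : r ⊆ Ici x ×ˢ Iic y := by
    rw [← h.closure_interior]
    exact closure_minimal hsub (isClosed_Ici.prod isClosed_Iic)
  refine ⟨le_csInf (h.1.image _) ?_, csSup_le (h.1.image _) ?_⟩
  · rintro _ ⟨p, hp, rfl⟩
    exact (hr hp).1
  · rintro _ ⟨p, hp, rfl⟩
    exact (hr hp).2

/-- If `p` avoids the five tiles of `r` that meet the open half-planes to the left of and
above `M(r)`, then `p` lies weakly to the right of `x⁻(r)` and weakly below `y⁺(r)`. -/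
lemma bounds_of_notMem_tiles {r : Reg} {p : ℝ × ℝ}
    (hNW : p ∉ Tile.NW.region r) (hN : p ∉ Tile.N.region r) (hNE : p ∉ Tile.NE.region r)
    (hW : p ∉ Tile.W.region r) (hSW : p ∉ Tile.SW.region r) :
    xm r ≤ p.1 ∧ p.2 ≤ yp r := by
  simp only [Tile.region, Ix, Iy, mem_prod, mem_Icc, mem_Ici, mem_Iic] at *
  grind

/-- If `r O c` and `c` only meets tiles of `r` among `E`, `SE`, `S`, `O`, then `M(r)` and
`M(c)` have the same upper-left corner. -/
lemma corner_eq {r c : Reg} {T : Set Tile} (hr : IsRegion r) (hc : IsRegion c)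
    (h1 : cdc r {Tile.O} c) (h2 : cdc c T r)
    (hT : T ⊆ {Tile.E, Tile.SE, Tile.S, Tile.O}) : xm r = xm c ∧ yp r = yp c := by
  have A : ∀ p ∈ interior r, xm c ≤ p.1 ∧ p.2 ≤ yp c := by
    intro p hp
    have key : ∀ χ : Tile, χ ≠ Tile.O → p ∉ χ.region c := fun χ hχ hm =>
      hχ ((h1 χ).1 ⟨p, hp, hm⟩)
    apply bounds_of_notMem_tiles <;> exact key _ (by decide)
  have B : ∀ p ∈ interior c, xm r ≤ p.1 ∧ p.2 ≤ yp r := by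
    intro p hp
    have key : ∀ χ : Tile, χ ∉ ({Tile.E, Tile.SE, Tile.S, Tile.O} : Set Tile) →
        p ∉ χ.region r := fun χ hχ hm => hχ (hT ((h2 χ).1 ⟨p, hp, hm⟩))
    apply bounds_of_notMem_tiles <;> exact key _ (by simp)
  have hA := hr.bounds_of_interior A
  have hB := hc.bounds_of_interior B
  exact ⟨le_antisymm hB.1 hA.1, le_antisymm hA.2 hB.2⟩

/-- If connected regions `a, b, c` satisfy `a O c`,
`c E:SE:S:O a`, `b O c` and `c E:SE:S b`, then the mbrs of `a, b, c` share
the same upper-left corner point and `M(a)` is not contained in `M(b)`. -/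
theorem stmt6 (a b c : Reg)
    (ha : IsConnRegion a) (hb : IsConnRegion b) (hc : IsConnRegion c)
    (h1 : cdc a {Tile.O} c)
    (h2 : cdc c {Tile.E, Tile.SE, Tile.S, Tile.O} a)
    (h3 : cdc b {Tile.O} c)
    (h4 : cdc c {Tile.E, Tile.SE, Tile.S} b) :
    xm a = xm b ∧ xm b = xm c ∧ yp a = yp b ∧ yp b = yp c ∧
    ¬ (MBR a ⊆ MBR b) := by
  have hac := corner_eq ha.1 hc.1 h1 h2 subset_rfl
  have hbc := corner_eq hb.1 hc.1 h3 h4 (by intro χ hχ; simp at hχ ⊢; tauto)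
  refine ⟨hac.1.trans hbc.1.symm, hbc.1, hac.2.trans hbc.2.symm, hbc.2, fun hsub => ?_⟩
  obtain ⟨p, hp, hpa⟩ := (h2 Tile.O).2 (by simp)
  have hO := (h4 Tile.O).1 ⟨p, hp, hsub hpa⟩
  simp at hO
end

section
/- Let p be a propositional variable and suppose connected regions assigned to u_p, u_{¬p}, f_p, f_{¬p}, f_p⁰ and the six auxiliary variables form a solution of the network N_p. Then u_p is vertical w.r.t. f_p if and only if u_{¬p} is horizontal w.r.t. f_{¬p} (i.e. (u_p, f_p) ∈ s⊗fi ⟺ (u_{¬p}, f_{¬p}) ∈ si⊗f). -/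
/-! All regions of the network share their upper-left corner `(x⁻, y⁺)`, so the bounding rectangle
of each is determined by its right and lower extents. The network `N_⌜(u, v; w₁, w₂)` says that `u` and `v` have a common
upper-left corner and that neither bounding rectangle contains the other: `w₁` meets `O(u)` and
misses `O(v)`, and `w₂` does the opposite (`NetULC.incomparable`). Hence `u` is vertical or
horizontal with respect to `v` (`NetULC.ulc`).

If `u_p` is vertical w.r.t. `f_p`, then it is narrower than `f_p ⊆ M(u_{¬p})`, so `u_p` is vertical
w.r.t. `u_{¬p}`, i.e. deeper; as `u_p ⊆ M(f_{¬p})`, also `f_{¬p}` is deeper than `u_{¬p}`, so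
`u_{¬p}` is horizontal w.r.t. `f_{¬p}`. The converse reverses these steps. -/

open Set

/-- The nine tiles of `b` cover the plane, so a point of the interior of `a` lies in a tile of `T`. -/
lemma cdc.exists_tile {a b : Reg} {T : Set Tile} (h : cdc a T b) {q : ℝ × ℝ}
    (hq : q ∈ interior a) : ∃ χ ∈ T, q ∈ χ.region b := by
  obtain ⟨χ, hχ⟩ : ∃ χ : Tile, q ∈ χ.region b := by
    have hx : q.1 ∈ Iic (xm b) ∨ q.1 ∈ Ix b ∨ q.1 ∈ Ici (xp b) := by
      simp only [Ix, mem_Iic, mem_Icc, mem_Ici]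
      grind
    have hy : q.2 ∈ Iic (ym b) ∨ q.2 ∈ Iy b ∨ q.2 ∈ Ici (yp b) := by
      simp only [Iy, mem_Iic, mem_Icc, mem_Ici]
      grind
    rcases hx with hx | hx | hx <;> rcases hy with hy | hy | hy
    exacts [⟨.SW, hx, hy⟩, ⟨.W, hx, hy⟩, ⟨.NW, hx, hy⟩, ⟨.S, hx, hy⟩, ⟨.O, hx, hy⟩,
      ⟨.N, hx, hy⟩, ⟨.SE, hx, hy⟩, ⟨.E, hx, hy⟩, ⟨.NE, hx, hy⟩]
  exact ⟨χ, (h χ).1 ⟨q, hq, hχ⟩, hχ⟩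

/-- A region is the closure of its interior, so a closed condition on the interior holds on all of
the region. -/
lemma IsConnRegion.subset {a C : Reg} (ha : IsConnRegion a) (hC : IsClosed C)
    (h : interior a ⊆ C) : a ⊆ C := by
  rw [ha.1.2.2]
  exact closure_minimal h hC

lemma cdc.subset_mbr {a b : Reg} (ha : IsConnRegion a) (h : cdc a {Tile.O} b) :
    a ⊆ Icc (xm b) (xp b) ×ˢ Icc (ym b) (yp b) := by
  refine ha.subset (isClosed_Icc.prod isClosed_Icc) fun q hq => ?_
  obtain ⟨χ, rfl, hχ⟩ := h.exists_tile hq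
  exact hχ

lemma cdc.bounds {a b : Reg} (ha : IsConnRegion a) (h : cdc a {Tile.O} b) :
    xm b ≤ xm a ∧ xp a ≤ xp b ∧ ym b ≤ ym a ∧ yp a ≤ yp b := by
  have hs := h.subset_mbr ha
  have hne := ha.1.1
  exact ⟨le_csInf (hne.image _) (by rintro _ ⟨q, hq, rfl⟩; exact (hs hq).1.1),
    csSup_le (hne.image _) (by rintro _ ⟨q, hq, rfl⟩; exact (hs hq).1.2),
    le_csInf (hne.image _) (by rintro _ ⟨q, hq, rfl⟩; exact (hs hq).2.1),
    csSup_le (hne.image _) (by rintro _ ⟨q, hq, rfl⟩; exact (hs hq).2.2)⟩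

/-- The tiles `E, SE, S, O` of `b` all lie in the quadrant to the lower right of the corner
`(x⁻(b), y⁺(b))`. The hypotheses `hx`, `hy` say that `M(b)` is nonempty. -/
lemma cdc.quadrant {a b : Reg} {T : Set Tile} (hx : xm b ≤ xp b) (hy : ym b ≤ yp b)
    (hT : T ⊆ {Tile.E, Tile.SE, Tile.S, Tile.O}) (h : cdc a T b) :
    interior a ⊆ Ici (xm b) ×ˢ Iic (yp b) := by
  intro q hq
  obtain ⟨χ, hχT, hχ⟩ := h.exists_tile hq
  rcases hT hχT with rfl | rfl | rfl | rfl
  exacts [⟨hx.trans hχ.1, hχ.2.2⟩, ⟨hx.trans hχ.1, le_trans hχ.2 hy⟩,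
    ⟨hχ.1.1, le_trans hχ.2 hy⟩, ⟨hχ.1.1, hχ.2.2⟩]

lemma IsConnRegion.box {a : Reg} (ha : IsConnRegion a) : xm a ≤ xp a ∧ ym a ≤ yp a := by
  obtain ⟨⟨hne, hb, -⟩, -⟩ := ha
  have h1 : Bornology.IsBounded (Prod.fst '' a) := hb.image_fst
  have h2 : Bornology.IsBounded (Prod.snd '' a) := hb.image_snd
  exact ⟨csInf_le_csSup (hne.image _) h1.bddBelow h1.bddAbove,
    csInf_le_csSup (hne.image _) h2.bddBelow h2.bddAbove⟩

/-- If `a O w` and `w` lies in the tiles `E, SE, S, O` of `a`, then `a` and `w` have the same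
upper-left corner. -/
lemma corner_eq_s8 {a w : Reg} {T : Set Tile} (ha : IsConnRegion a) (hw : IsConnRegion w)
    (h : cdc a {Tile.O} w) (hT : T ⊆ {Tile.E, Tile.SE, Tile.S, Tile.O}) (h' : cdc w T a) :
    xm a = xm w ∧ yp a = yp w := by
  have hs := hw.subset (isClosed_Ici.prod isClosed_Iic) (h'.quadrant ha.box.1 ha.box.2 hT)
  obtain ⟨h1, -, -, h4⟩ := h.bounds ha
  have hne := hw.1.1
  exact ⟨le_antisymm (le_csInf (hne.image _) (by rintro _ ⟨q, hq, rfl⟩; exact (hs hq).1)) h1,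
    le_antisymm h4 (csSup_le (hne.image _) (by rintro _ ⟨q, hq, rfl⟩; exact (hs hq).2))⟩

/-- If `u` and `v` share their upper-left corner and the interior of `w` meets `M(u)` but not `M(v)`,
then `u` extends further than `v` to the right or downwards. -/
lemma extends_of_meets {u v w : Reg} (hx : xm u = xm v) (hy : yp u = yp v)
    (hu : cdc w {Tile.E, Tile.SE, Tile.S, Tile.O} u) (hv : cdc w {Tile.E, Tile.SE, Tile.S} v) :
    xp v < xp u ∨ ym u < ym v := by
  obtain ⟨q, hq, ⟨hq1, hq2⟩, ⟨hq3, hq4⟩⟩ := (hu .O).2 (by simp)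
  by_contra! hc
  have : Tile.O ∈ ({Tile.E, Tile.SE, Tile.S} : Set Tile) :=
    (hv .O).1 ⟨q, hq, ⟨hx ▸ hq1, hq2.trans hc.1⟩, ⟨hc.2.trans hq3, hy ▸ hq4⟩⟩
  simp at this

lemma NetULC.incomparable {u v w1 w2 : Reg} (hu : IsConnRegion u) (hv : IsConnRegion v)
    (hw1 : IsConnRegion w1) (h : NetULC u v w1 w2) :
    xm u = xm v ∧ yp u = yp v ∧ (xp v < xp u ∨ ym u < ym v) ∧ (xp u < xp v ∨ ym v < ym u) := by
  obtain ⟨h1, h2, h3, h4, -, h6, -, h8⟩ := h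
  have hT : ({Tile.E, Tile.SE, Tile.S} : Set Tile) ⊆ {Tile.E, Tile.SE, Tile.S, Tile.O} := by
    intro χ
    simp only [mem_insert_iff, mem_singleton_iff]
    tauto
  obtain ⟨hx, hy⟩ := corner_eq_s8 hu hw1 h1 subset_rfl h2
  obtain ⟨hx', hy'⟩ := corner_eq_s8 hv hw1 h3 hT h4
  have hxx := hx.trans hx'.symm
  have hyy := hy.trans hy'.symm
  exact ⟨hxx, hyy, extends_of_meets hxx hyy h2 h4, extends_of_meets hxx.symm hyy.symm h6 h8⟩

lemma NetULC.ulc {u v w1 w2 : Reg} (hu : IsConnRegion u) (hv : IsConnRegion v)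
    (hw1 : IsConnRegion w1) (h : NetULC u v w1 w2) : ULC u v := by
  obtain ⟨hx, hy, h1, h2⟩ := h.incomparable hu hv hw1
  simp only [ULC, Vert, Horiz, RA, RAs, RAf, RAsi, RAfi]
  grind

/-- In any solution of `N_p` by connected regions, `u_p` is
vertical w.r.t. `f_p` iff `u_{¬p}` is horizontal w.r.t. `f_{¬p}`. -/
theorem stmt8 (up unp fp fnp fp0 a1 a2 b1 b2 c1 c2 : Reg)
    (hup : IsConnRegion up) (hunp : IsConnRegion unp)
    (hfp : IsConnRegion fp) (hfnp : IsConnRegion fnp) (hfp0 : IsConnRegion fp0)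
    (ha1 : IsConnRegion a1) (ha2 : IsConnRegion a2)
    (hb1 : IsConnRegion b1) (hb2 : IsConnRegion b2)
    (hc1 : IsConnRegion c1) (hc2 : IsConnRegion c2)
    (h : NetP up unp fp fnp fp0 a1 a2 b1 b2 c1 c2) :
    Vert up fp ↔ Horiz unp fnp := by
  obtain ⟨h1, h2, hA, hB, hC, -⟩ := h
  have hA := hA.ulc hup hfp ha1
  have hB := hB.ulc hunp hfnp hb1
  have hC := hC.ulc hup hunp hc1
  have h1 := h1.bounds hup
  have h2 := h2.bounds hfp
  simp only [ULC, Vert, Horiz, RA, RAs, RAf, RAsi, RAfi] at hA hB hC ⊢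
  grind
end
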